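/- There exists a finite alphabet Σ and a history-deterministic Büchi automaton A over Σ such that every deterministic Büchi automaton that is language-equivalent to A (i.e., recognises the same set of infinite words) has strictly more states than A. -/

import Mathlib

/-- A (nondeterministic) Büchi/coBüchi automaton: an initial state, a set of
transitions, and a subset of *significant* transitions. -/
structure BuchiAutomaton (σ : Type) (Q : Type) where
  init : Q
  trans : Set (Q × σ × Q)
  sig : Set (Q × σ × Q)
  sig_sub : sig ⊆ trans

namespace BuchiAutomaton

variable {σ Q : Type}

/-- `ρ` is a run of `A` on the infinite word `w`, starting at the state `p`. -/
def IsRunFrom (A : BuchiAutomaton σ Q) (p : Q) (w : ℕ → σ) (ρ : ℕ → Q) : Prop :=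
  ρ 0 = p ∧ ∀ i, (ρ i, w i, ρ (i + 1)) ∈ A.trans

/-- Büchi acceptance: the run contains infinitely many significant transitions. -/
def BuchiAcc (A : BuchiAutomaton σ Q) (w : ℕ → σ) (ρ : ℕ → Q) : Prop :=
  ∀ N, ∃ i, N ≤ i ∧ (ρ i, w i, ρ (i + 1)) ∈ A.sig

/-- coBüchi acceptance: the run contains finitely many significant transitions. -/
def CoBuchiAcc (A : BuchiAutomaton σ Q) (w : ℕ → σ) (ρ : ℕ → Q) : Prop :=
  ∃ N, ∀ i, N ≤ i → (ρ i, w i, ρ (i + 1)) ∉ A.sig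

/-- The language of `A` (as a Büchi automaton), with initial state `p`. -/
def LangFrom (A : BuchiAutomaton σ Q) (p : Q) : Set (ℕ → σ) :=
  {w | ∃ ρ, A.IsRunFrom p w ρ ∧ A.BuchiAcc w ρ}

/-- The language of `A`, read as a Büchi automaton. -/
def Lang (A : BuchiAutomaton σ Q) : Set (ℕ → σ) :=
  A.LangFrom A.init

/-- The language of `A`, read as a coBüchi automaton. -/
def CoLang (A : BuchiAutomaton σ Q) : Set (ℕ → σ) :=
  {w | ∃ ρ, A.IsRunFrom A.init w ρ ∧ A.CoBuchiAcc w ρ}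

/-- `A` is deterministic: at most one outgoing transition per state and letter. -/
def Deterministic (A : BuchiAutomaton σ Q) : Prop :=
  ∀ p a q q', (p, a, q) ∈ A.trans → (p, a, q') ∈ A.trans → q = q'

/-- `FinRun A l p`: `l` is a finite run of `A` from the initial state, ending in
the state `p` (represented as the chronological list of its transitions). -/
inductive FinRun (A : BuchiAutomaton σ Q) : List (Q × σ × Q) → Q → Prop
  | nil : FinRun A [] A.init
  | snoc {l : List (Q × σ × Q)} {p : Q} {a : σ} {q : Q} :
      FinRun A l p → (p, a, q) ∈ A.trans → FinRun A (l ++ [(p, a, q)]) q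

/-- A resolver for `A`: a function from finite runs and letters to transitions,
such that on every finite run from the initial state ending in a state `p` and
every letter `a`, it outputs a transition on `a` with source `p`. -/
structure Resolver (A : BuchiAutomaton σ Q) where
  res : List (Q × σ × Q) → σ → Q × σ × Q
  res_valid : ∀ l p a, A.FinRun l p →
    (res l a).1 = p ∧ (res l a).2.1 = a ∧ res l a ∈ A.trans

/-- The history (finite run) built by a resolver after reading `n` letters of `w`. -/
def Resolver.hist {A : BuchiAutomaton σ Q} (r : Resolver A) (w : ℕ → σ) : ℕ → List (Q × σ × Q)
  | 0 => []
  | n + 1 => r.hist w n ++ [r.res (r.hist w n) (w n)]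

/-- The run induced by the resolver on `w` satisfies the Büchi condition. -/
def Resolver.InducedBuchiAcc {A : BuchiAutomaton σ Q} (r : Resolver A) (w : ℕ → σ) : Prop :=
  ∀ N, ∃ n, N ≤ n ∧ r.res (r.hist w n) (w n) ∈ A.sig

/-- The run induced by the resolver on `w` satisfies the coBüchi condition. -/
def Resolver.InducedCoBuchiAcc {A : BuchiAutomaton σ Q} (r : Resolver A) (w : ℕ → σ) : Prop :=
  ∃ N, ∀ n, N ≤ n → r.res (r.hist w n) (w n) ∉ A.sig

/-- `A` is history-deterministic (as a Büchi automaton). -/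
def HistoryDeterministic (A : BuchiAutomaton σ Q) : Prop :=
  ∃ r : Resolver A, ∀ w ∈ A.Lang, r.InducedBuchiAcc w

/-- `A` is history-deterministic (as a coBüchi automaton). -/
def CoHistoryDeterministic (A : BuchiAutomaton σ Q) : Prop :=
  ∃ r : Resolver A, ∀ w ∈ A.CoLang, r.InducedCoBuchiAcc w

end BuchiAutomaton

/-!
Tokens sit on the two opposite darts of each edge of a graph while a word stays in the *room* of
that edge, and on the vertices while it is in the *hall*. The letters move and kill tokens, and the
words to be accepted are those that are illegal or kill every token. An automaton that follows a
set of tokens, all of which die before it takes a significant transition and starts anew, may guess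
on `release` which dart of the edge to follow further: it then remembers only the label of that
dart, which confines the token to a block of vertices. This is resolved by guessing an immortal
token, and costs one state per token, room and label, that is `3J + V + L + 1` states for `J`
edges, `V` vertices and `L` labels.

A deterministic automaton cannot forget the other dart, and needs four states per edge. The number
of significant transitions that it can still take before a given token dies is a rank that never
increases. If an edge has few states in its own room, and the hall states to which they are released
also serve other edges, then the tokens of these other edges are decoys that keep the ranks up, and
an adversary kills all tokens again and again without a significant transition.

It remains to find a graph with `V + L + 1 < J`. Translations of three edges and one block modulo 97
give `V = L = 97` and `J = 291`.
-/

open Filter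

theorem mul_card_le_card_of_pairwise_disjoint {ι α : Type*} [Finite ι] [Finite α] {n : ℕ}
    {s : ι → Set α} (hs : Pairwise (Function.onFun Disjoint s)) (hn : ∀ i, n ≤ (s i).ncard) :
    n * Nat.card ι ≤ Nat.card α := by
  have := Fintype.ofFinite ι
  calc n * Nat.card ι = ∑ _i : ι, n := by simp [mul_comm]
    _ ≤ ∑ i, (s i).ncard := Finset.sum_le_sum fun i _ => hn i
    _ = (⋃ i, s i).ncard := by
      rw [Set.ncard_iUnion_of_finite (fun i => (s i).toFinite) hs, finsum_eq_sum_of_fintype]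
    _ ≤ Nat.card α := Set.ncard_le_card _

/-- The infinite word with first letter `a` and remaining letters `w`. -/
def consWord {α : Type} (a : α) (w : ℕ → α) : ℕ → α
  | 0 => a
  | n + 1 => w n

theorem frequently_of_forall_or_lt {P : ℕ → Prop} {m : ℕ → ℕ} (h : ∀ n, P n ∨ m (n + 1) < m n) :
    ∃ᶠ n in atTop, P n := by
  intro hP
  obtain ⟨N, hN⟩ := eventually_atTop.1 hP
  exact not_strictAnti_of_wellFoundedLT (fun n => m (N + n))
    (strictAnti_nat_of_succ_lt fun n => (h (N + n)).resolve_left (hN _ (Nat.le_add_right N n)))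

theorem eventually_of_succ_of_eventually_succ {P : ℕ → Prop}
    (h : ∀ᶠ n in atTop, P n → P (n + 1)) : ∀ᶠ n in atTop, P (n + 1) → P n := by
  obtain ⟨N, hN⟩ := eventually_atTop.1 h
  by_cases hP : ∃ n ≥ N, P n
  · obtain ⟨n, hn, hPn⟩ := hP
    filter_upwards [eventually_ge_atTop n] with k hk _
    exact Nat.le_induction hPn (fun k hk => hN k (hn.trans hk)) k hk
  · filter_upwards [eventually_ge_atTop N] with k hk hPk
    exact absurd ⟨k + 1, by omega, hPk⟩ hP

namespace BuchiAutomaton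

variable {σ Q : Type} {A : BuchiAutomaton σ Q} {p q : Q} {a : σ} {w : ℕ → σ}

theorem buchiAcc_iff_frequently {ρ : ℕ → Q} :
    A.BuchiAcc w ρ ↔ ∃ᶠ n in atTop, (ρ n, w n, ρ (n + 1)) ∈ A.sig :=
  frequently_atTop.symm

section Rank

variable {Y : Set Q}

/-- Some path with `n + 1` transitions starts at the given state, ends with a significant
transition, and this last transition leads into `Y`. -/
def SigReachesIn (A : BuchiAutomaton σ Q) (Y : Set Q) : ℕ → Q → Prop
  | 0, p => ∃ a, ∃ q ∈ Y, (p, a, q) ∈ A.sig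
  | n + 1, p => ∃ a q, (p, a, q) ∈ A.trans ∧ A.SigReachesIn Y n q

/-- Some path from `p` ends with a significant transition leading into `Y`. -/
def SigReaches (A : BuchiAutomaton σ Q) (Y : Set Q) (p : Q) : Prop :=
  ∃ n, A.SigReachesIn Y n p

theorem SigReaches.of_mem_sig (h : (p, a, q) ∈ A.sig) (hq : q ∈ Y) : A.SigReaches Y p :=
  ⟨0, a, q, hq, h⟩

theorem SigReaches.of_mem_trans (h : (p, a, q) ∈ A.trans) (hq : A.SigReaches Y q) :
    A.SigReaches Y p :=
  let ⟨n, hn⟩ := hq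
  ⟨n + 1, a, q, h, hn⟩

theorem SigReachesIn.exists_trans (hY : ∀ p ∈ Y, A.SigReaches Y p) {n : ℕ}
    (h : A.SigReachesIn Y n p) :
    ∃ a q m, A.SigReachesIn Y m q ∧ (p, a, q) ∈ A.trans ∧ ((p, a, q) ∈ A.sig ∨ m < n) := by
  cases n with
  | zero =>
    obtain ⟨a, q, hq, hsig⟩ := h
    obtain ⟨m, hm⟩ := hY q hq
    exact ⟨a, q, m, hm, A.sig_sub hsig, .inl hsig⟩
  | succ n =>
    obtain ⟨a, q, htrans, hq⟩ := h
    exact ⟨a, q, n, hq, htrans, .inr n.lt_succ_self⟩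

theorem langFrom_nonempty (hY : ∀ p ∈ Y, A.SigReaches Y p) (hp : p ∈ Y) :
    (A.LangFrom p).Nonempty := by
  have hnext (x : {x : ℕ × Q // A.SigReachesIn Y x.1 x.2}) :
      ∃ (a : σ) (y : {x : ℕ × Q // A.SigReachesIn Y x.1 x.2}), (x.1.2, a, y.1.2) ∈ A.trans ∧
        ((x.1.2, a, y.1.2) ∈ A.sig ∨ y.1.1 < x.1.1) := by
    obtain ⟨a, q, m, hq, h⟩ := x.2.exists_trans hY
    exact ⟨a, ⟨(m, q), hq⟩, h⟩
  choose letter next htrans hsig using hnext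
  obtain ⟨n, hn⟩ := hY p hp
  let x (i : ℕ) := next^[i] ⟨(n, p), hn⟩
  have hx (i : ℕ) : x (i + 1) = next (x i) := Function.iterate_succ_apply' next i _
  refine ⟨fun i => letter (x i), fun i => (x i).1.2, ⟨rfl, fun i => ?_⟩,
    buchiAcc_iff_frequently.2 (frequently_of_forall_or_lt (m := fun i => (x i).1.1) fun i => ?_)⟩
  · simpa only [hx] using htrans (x i)
  · simpa only [hx] using hsig (x i)

/-- The progress measure of an automaton with empty language: it never increases along transitions
and decreases along significant ones. -/
noncomputable def rank (A : BuchiAutomaton σ Q) (p : Q) : ℕ := {q | A.SigReaches {q} p}.ncard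

theorem rank_le_of_mem_trans [Finite Q] (h : (p, a, q) ∈ A.trans) : A.rank q ≤ A.rank p :=
  Set.ncard_le_ncard (fun _ => .of_mem_trans h) (Set.toFinite _)

theorem rank_lt_of_mem_sig [Finite Q] (hA : ∀ p, A.LangFrom p = ∅) (h : (p, a, q) ∈ A.sig) :
    A.rank q < A.rank p := by
  refine Set.ncard_lt_ncard (Set.ssubset_iff_exists.2
    ⟨fun _ => .of_mem_trans (A.sig_sub h), q, .of_mem_sig h rfl, fun hq => ?_⟩) (Set.toFinite _)
  exact (langFrom_nonempty (Y := {q}) (fun _ hp => hp ▸ hq) rfl).ne_empty (hA q)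

end Rank

namespace Deterministic

theorem isRunFrom_unique (hA : A.Deterministic) {ρ ρ' : ℕ → Q} (h : A.IsRunFrom p w ρ)
    (h' : A.IsRunFrom p w ρ') : ρ = ρ' := by
  funext n
  induction n with
  | zero => exact h.1.trans h'.1.symm
  | succ n ih => exact hA _ _ _ _ (h.2 n) (ih ▸ h'.2 n)

theorem consWord_mem_langFrom (hA : A.Deterministic) (h : (p, a, q) ∈ A.trans) :
    consWord a w ∈ A.LangFrom p ↔ w ∈ A.LangFrom q := by
  constructor
  · rintro ⟨ρ, ⟨rfl, hρ⟩, hacc⟩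
    refine ⟨fun n => ρ (n + 1), ⟨hA _ _ _ _ (hρ 0) h, fun n => hρ (n + 1)⟩, fun N => ?_⟩
    obtain ⟨_ | n, hn, hsig⟩ := hacc (N + 1)
    · omega
    · exact ⟨n, by omega, hsig⟩
  · rintro ⟨ρ, ⟨rfl, hρ⟩, hacc⟩
    refine ⟨consWord p ρ, ⟨rfl, fun n => ?_⟩, fun N => ?_⟩
    · cases n with
      | zero => exact h
      | succ n => exact hρ n
    · obtain ⟨n, hn, hsig⟩ := hacc N
      exact ⟨n + 1, by omega, hsig⟩

end Deterministic

/-- A resolver that, instead of the whole history, only consults the current state and a memory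
content, updated after each transition. -/
structure MemoryResolver (A : BuchiAutomaton σ Q) (M : Type) where
  start : M
  move : M → Q → σ → Q
  update : M → σ → Q → M
  move_mem : ∀ m q a, (q, a, move m q a) ∈ A.trans

namespace MemoryResolver

variable {M : Type} (s : A.MemoryResolver M)

/-- The state and the memory content after a finite run. -/
def conf (l : List (Q × σ × Q)) : Q × M :=
  l.foldl (fun x e => (e.2.2, s.update x.2 e.2.1 e.2.2)) (A.init, s.start)

theorem fst_conf_of_finRun {l : List (Q × σ × Q)} (h : A.FinRun l q) : (s.conf l).1 = q := by
  cases h <;> simp [conf]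

/-- The history-based resolver given by a memory-based one. -/
def toResolver : A.Resolver where
  res l a := ((s.conf l).1, a, s.move (s.conf l).2 (s.conf l).1 a)
  res_valid _ _ _ h := ⟨s.fst_conf_of_finRun h, rfl, s.move_mem _ _ _⟩

/-- The states and memory contents along the run induced on an infinite word. -/
def play (w : ℕ → σ) : ℕ → Q × M
  | 0 => (A.init, s.start)
  | n + 1 =>
    let q := s.move (play w n).2 (play w n).1 (w n)
    (q, s.update (play w n).2 (w n) q)

theorem conf_hist (w : ℕ → σ) (n : ℕ) : s.conf (s.toResolver.hist w n) = s.play w n := by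
  induction n with
  | zero => rfl
  | succ n ih =>
    rw [play, ← ih]
    simp [Resolver.hist, conf, toResolver]

theorem res_hist (w : ℕ → σ) (n : ℕ) : s.toResolver.res (s.toResolver.hist w n) (w n) =
    ((s.play w n).1, w n, (s.play w (n + 1)).1) := by
  simp only [← s.conf_hist w n, play, toResolver]

theorem isRunFrom_play (w : ℕ → σ) : A.IsRunFrom A.init w fun n => (s.play w n).1 :=
  ⟨rfl, fun _ => s.move_mem _ _ _⟩

theorem lang_eq_and_historyDeterministic {X : Set (ℕ → σ)} (hX : A.Lang ⊆ X)
    (hs : ∀ w ∈ X, A.BuchiAcc w fun n => (s.play w n).1) :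
    A.Lang = X ∧ A.HistoryDeterministic := by
  refine ⟨hX.antisymm fun w hw => ⟨_, s.isRunFrom_play w, hs w hw⟩,
    s.toResolver, fun w hw N => ?_⟩
  obtain ⟨n, hn, hsig⟩ := hs w (hX hw) N
  refine ⟨n, hn, ?_⟩
  rw [res_hist]
  exact hsig

end MemoryResolver

end BuchiAutomaton

/-! ### Token systems -/

/-- Letters acting on tokens: the letter `a` may be read in the class `src a`, leads to the class
`tgt a`, and moves or kills (`none`) each token. -/
structure TokenSystem (σ C T : Type) where
  src : σ → C
  tgt : σ → C
  step : σ → T → Option T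

namespace TokenSystem

variable {σ C T Q : Type} {S : TokenSystem σ C T} {c : C} {a : σ} {x y : T} {q : Q} {w : ℕ → σ}

/-- The letters of `w` can be read one after the other, starting in the class `c`. -/
def Legal (S : TokenSystem σ C T) (c : C) (w : ℕ → σ) : Prop :=
  S.src (w 0) = c ∧ ∀ n, S.src (w (n + 1)) = S.tgt (w n)

/-- Some token, inserted at some point of `w`, survives forever. -/
def Immortal (S : TokenSystem σ C T) (w : ℕ → σ) : Prop :=
  ∃ f : ℕ → T, ∀ᶠ n in atTop, S.step (w n) (f n) = some (f (n + 1))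

/-- The infinite words that are illegal from the class `c` or kill every token. -/
def lang (S : TokenSystem σ C T) (c : C) : Set (ℕ → σ) :=
  {w | S.Legal c w → ¬ S.Immortal w}

theorem legal_consWord : S.Legal c (consWord a w) ↔ S.src a = c ∧ S.Legal (S.tgt a) w := by
  constructor
  · rintro ⟨h₀, h⟩
    exact ⟨h₀, h 0, fun n => h (n + 1)⟩
  · rintro ⟨h₀, h₁, h⟩
    refine ⟨h₀, fun n => ?_⟩
    cases n with
    | zero => exact h₁
    | succ n => exact h n

theorem immortal_consWord : S.Immortal (consWord a w) ↔ S.Immortal w := by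
  constructor
  · rintro ⟨f, hf⟩
    exact ⟨fun n => f (n + 1), (tendsto_add_atTop_nat 1).eventually hf⟩
  · rintro ⟨f, hf⟩
    refine ⟨fun n => f (n - 1), ?_⟩
    rw [← Filter.map_add_atTop_eq_nat 1, eventually_map]
    exact hf

theorem consWord_mem_lang : consWord a w ∈ S.lang c ↔ (S.src a = c → w ∈ S.lang (S.tgt a)) := by
  simp only [lang, Set.mem_ofPred_eq, legal_consWord, immortal_consWord, and_imp]

theorem not_immortal_of_frequently_reset {E : ℕ → Set T} {R : ℕ → Prop}
    (hkeep : ∀ n, ∀ x ∈ E n, ∀ y, S.step (w n) x = some y → ¬ R n ∧ y ∈ E (n + 1))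
    (hreset : ∀ n x y, R n → S.step (w n) x = some y → y ∈ E (n + 1))
    (hR : ∃ᶠ n in atTop, R n) : ¬ S.Immortal w := by
  rintro ⟨f, hf⟩
  obtain ⟨N, hN⟩ := eventually_atTop.1 hf
  obtain ⟨k, hk, hRk⟩ := frequently_atTop.1 hR N
  have hmem (n : ℕ) (hn : k + 1 ≤ n) : f n ∈ E n := by
    induction n, hn using Nat.le_induction with
    | base => exact hreset k _ _ hRk (hN k hk)
    | succ n hn ih => exact (hkeep n _ ih _ (hN n (by omega))).2
  obtain ⟨n, hn, hRn⟩ := frequently_atTop.1 hR (k + 1)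
  exact (hkeep n _ (hmem n hn) _ (hN n (by omega))).1 hRn

/-- A deterministic automaton whose states are assigned to classes and which accepts a legal word
if and only if all tokens die. -/
structure Recognizer (S : TokenSystem σ C T) (Q : Type) where
  init : Q
  next : Q → σ → Q
  sig : Q → σ → Prop
  HasClass : C → Q → Prop
  exists_hasClass_init : ∃ c, HasClass c init
  hasClass_next {q : Q} {a : σ} : HasClass (S.src a) q → HasClass (S.tgt a) (next q a)
  hasClass_unique {c c' : C} {q : Q} : HasClass c q → HasClass c' q → c = c'
  frequently_sig_iff {q : ℕ → Q} {w : ℕ → σ} :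
    (∀ n, HasClass (S.src (w n)) (q n) ∧ q (n + 1) = next (q n) (w n)) →
      ((∃ᶠ n in atTop, sig (q n) (w n)) ↔ ¬ S.Immortal w)

section OfDeterministic

variable {B : BuchiAutomaton σ Q}

theorem exists_trans_of_langFrom_eq (hne : (S.lang (S.tgt a)).Nonempty)
    (hq : B.LangFrom q = S.lang (S.src a)) : ∃ q', (q, a, q') ∈ B.trans := by
  obtain ⟨w, hw⟩ := hne
  obtain ⟨ρ, ⟨rfl, hρ⟩, -⟩ := hq ▸ consWord_mem_lang.2 fun _ => hw
  exact ⟨ρ 1, hρ 0⟩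

theorem langFrom_eq_of_mem_trans (hB : B.Deterministic) (hq : B.LangFrom q = S.lang (S.src a))
    {q' : Q} (h : (q, a, q') ∈ B.trans) : B.LangFrom q' = S.lang (S.tgt a) := by
  ext w
  rw [← hB.consWord_mem_langFrom h, hq, consWord_mem_lang]
  exact ⟨fun hw => hw rfl, fun hw _ => hw⟩

theorem lang_injective (hnu : ∀ c, S.lang c ≠ Set.univ) : Function.Injective S.lang := by
  intro c c' h
  obtain ⟨w, hw⟩ := (Set.ne_univ_iff_exists_notMem _).1 (hnu c)
  have hw' : w ∉ S.lang c' := h ▸ hw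
  simp only [lang, Set.mem_ofPred_eq, Classical.not_imp] at hw hw'
  exact hw.1.1.symm.trans hw'.1.1

theorem nonempty_recognizer (hB : B.Deterministic) (hL : B.Lang = S.lang c)
    (hne : ∀ c, (S.lang c).Nonempty) (hnu : ∀ c, S.lang c ≠ Set.univ) :
    Nonempty (S.Recognizer Q) := by
  have hex (q : Q) (a : σ) :
      ∃ q', B.LangFrom q = S.lang (S.src a) → (q, a, q') ∈ B.trans := by
    by_cases hq : B.LangFrom q = S.lang (S.src a)
    · exact (exists_trans_of_langFrom_eq (hne _) hq).imp fun _ h _ => h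
    · exact ⟨q, fun h => absurd h hq⟩
  choose next hnext using hex
  refine ⟨{
    init := B.init
    next := next
    sig q a := (q, a, next q a) ∈ B.sig
    HasClass c q := B.LangFrom q = S.lang c
    exists_hasClass_init := ⟨c, hL⟩
    hasClass_next := fun hq => langFrom_eq_of_mem_trans hB hq (hnext _ _ hq)
    hasClass_unique := fun hc hc' => lang_injective hnu (hc.symm.trans hc')
    frequently_sig_iff := fun {q w} h => ?_ }⟩
  have hrun : B.IsRunFrom (q 0) w q := ⟨rfl, fun n => (h n).2 ▸ hnext _ _ (h n).1⟩
  have hlegal : S.Legal (S.src (w 0)) w := ⟨rfl, fun n => lang_injective hnu <|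
    (h (n + 1)).1.symm.trans (langFrom_eq_of_mem_trans hB (h n).1 (hrun.2 n))⟩
  have hacc : w ∈ B.LangFrom (q 0) ↔ B.BuchiAcc w q :=
    ⟨fun ⟨_, hρ, hacc⟩ => hB.isRunFrom_unique hρ hrun ▸ hacc, fun hacc => ⟨q, hrun, hacc⟩⟩
  rw [(h 0).1, BuchiAutomaton.buchiAcc_iff_frequently] at hacc
  simp only [← (h _).2]
  exact hacc.symm.trans ⟨fun hw => hw hlegal, fun hw _ => hw⟩

end OfDeterministic

namespace Recognizer

open BuchiAutomaton

variable (M : S.Recognizer Q)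

section Rank

variable [Nonempty T]

/-- The recognizer run together with one surviving token. -/
noncomputable def tokenProduct : BuchiAutomaton σ (Q × T) where
  init := (M.init, Classical.arbitrary T)
  trans := {((q, x), a, (q', x')) |
    M.HasClass (S.src a) q ∧ q' = M.next q a ∧ S.step a x = some x'}
  sig := {((q, x), a, (q', x')) |
    (M.HasClass (S.src a) q ∧ q' = M.next q a ∧ S.step a x = some x') ∧ M.sig q a}
  sig_sub _ h := h.1

theorem langFrom_tokenProduct (p : Q × T) : M.tokenProduct.LangFrom p = ∅ := by
  refine Set.eq_empty_of_forall_notMem ?_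
  rintro w ⟨ρ, ⟨-, hρ⟩, hacc⟩
  refine (M.frequently_sig_iff (q := fun n => (ρ n).1) fun n => ⟨(hρ n).1, (hρ n).2.1⟩).1 ?_
    ⟨fun n => (ρ n).2, .of_forall fun n => (hρ n).2.2⟩
  exact (buchiAcc_iff_frequently.1 hacc).mono fun n h => h.2

/-- Bounds the number of significant transitions that the recognizer can still take from `q`
before the token `x` dies. -/
noncomputable def rank (q : Q) (x : T) : ℕ := M.tokenProduct.rank (q, x)

variable [Finite Q] [Finite T]

theorem rank_next_le (hq : M.HasClass (S.src a) q) (h : S.step a x = some y) :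
    M.rank (M.next q a) y ≤ M.rank q x :=
  rank_le_of_mem_trans (a := a) ⟨hq, rfl, h⟩

theorem rank_next_lt (hq : M.HasClass (S.src a) q) (h : S.step a x = some y) (ha : M.sig q a) :
    M.rank (M.next q a) y < M.rank q x :=
  rank_lt_of_mem_sig M.langFrom_tokenProduct (a := a) ⟨⟨hq, rfl, h⟩, ha⟩

end Rank

/-- The Miyano–Hayashi breakpoint construction: between two significant transitions of the
breakpoint automaton the recognizer takes no significant one, while all tokens die. -/
def breakpoint : BuchiAutomaton σ (Q × Set T) where
  init := (M.init, Set.univ)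
  trans := {((q, E), a, (q', E')) | M.HasClass (S.src a) q ∧ ¬ M.sig q a ∧ q' = M.next q a ∧
    ∀ x ∈ E, ∀ y, S.step a x = some y → y ∈ E'}
  sig := {((q, E), a, (q', E')) | (M.HasClass (S.src a) q ∧ ¬ M.sig q a ∧ q' = M.next q a ∧
    ∀ x ∈ E, ∀ y, S.step a x = some y → y ∈ E') ∧ (∀ x ∈ E, S.step a x = none) ∧ E' = Set.univ}
  sig_sub _ h := h.1

theorem langFrom_breakpoint (p : Q × Set T) : M.breakpoint.LangFrom p = ∅ := by
  refine Set.eq_empty_of_forall_notMem ?_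
  rintro w ⟨ρ, ⟨-, hρ⟩, hacc⟩
  have hmortal : ¬ S.Immortal w := by
    refine not_immortal_of_frequently_reset (E := fun n => (ρ n).2)
      (fun n x hx y hy => ⟨fun hR => ?_, (hρ n).2.2.2 x hx y hy⟩)
      (fun n x y hR _ => ?_) (buchiAcc_iff_frequently.1 hacc)
    · exact Option.some_ne_none y (hy.symm.trans (hR.2.1 x hx))
    · exact hR.2.2.symm ▸ Set.mem_univ y
  obtain ⟨n, hn⟩ := ((M.frequently_sig_iff (q := fun n => (ρ n).1) fun n =>
    ⟨(hρ n).1, (hρ n).2.2.1⟩).2 hmortal).exists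
  exact (hρ n).2.1 hn

theorem exists_not_sigReaches_breakpoint {X : Set Q} (hX : X.Nonempty) :
    ∃ q ∈ X, ¬ M.breakpoint.SigReaches (X ×ˢ {Set.univ}) (q, Set.univ) := by
  by_contra! h
  obtain ⟨q, hq⟩ := hX
  refine (langFrom_nonempty (Y := X ×ˢ {Set.univ}) (p := (q, Set.univ)) ?_
    (Set.mk_mem_prod hq rfl)).ne_empty (M.langFrom_breakpoint _)
  rintro ⟨q, _⟩ ⟨hq, rfl⟩
  exact h q hq

end Recognizer

end TokenSystem

/-! ### Edge designs -/

/-- A family of edges `j`, each consisting of two opposite darts `(j, true)` and `(j, false)`,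
together with a label on every dart and a block of vertices for every label. -/
structure EdgeDesign (J V L : Type) where
  source : J → Bool → V
  label : J → Bool → L
  block : L → Set V
  source_ne (j : J) (t : Bool) : source j t ≠ source j (!t)
  source_mem (j : J) (t t' : Bool) : source j t ∈ block (label j t')
  mem_both {j : J} {v : V} : (∀ t, v ∈ block (label j t)) → ∃ t, v = source j t
  mem_star {j j' : J} {t t' : Bool} {v : V} : source j t = source j' t' → (j, t) ≠ (j', t') →
    v ∈ block (label j t) → v ∈ block (label j' t') → v = source j t
  not_mem_opposite {j j' : J} {t t' : Bool} : source j t = source j' t' → j ≠ j' →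
    source j' (!t') ∉ block (label j (!t))

namespace EdgeDesign

variable {J V L : Type}

/-- Tokens: the darts of an edge `j` live in the class `some j`, the *room* of `j`, and the vertices
live in the class `none`, the *hall*. -/
inductive Tok (J V : Type) : Type
  | dart : J → Bool → Tok J V
  | vertex : V → Tok J V
  deriving Fintype

/-- The alphabet: `swap` and `push` stay in a room, `release` leads from a room to the hall, and
`split` and `kill` lead from the hall to a room. -/
inductive Letter (J V : Type) : Type
  | swap : J → Letter J V
  | push : J → Bool → Letter J V
  | release : J → Letter J V
  | split : V → J → Letter J V
  | kill : J → Bool → Letter J V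
  deriving Fintype

instance [Nonempty J] : Nonempty (Tok J V) := ⟨.dart (Classical.arbitrary J) true⟩

instance [Finite J] [Finite V] : Finite (Tok J V) :=
  have := Fintype.ofFinite J
  have := Fintype.ofFinite V
  inferInstance

/-- The class in which a token lives. -/
def Tok.cls : Tok J V → Option J
  | .dart j _ => some j
  | .vertex _ => none

/-- The class in which a letter may be read. -/
def Letter.src : Letter J V → Option J
  | .swap j => some j
  | .push j _ => some j
  | .release j => some j
  | .split _ _ => none
  | .kill _ _ => none

/-- The class to which a letter leads. -/
def Letter.tgt : Letter J V → Option J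
  | .swap j => some j
  | .push j _ => some j
  | .release _ => none
  | .split _ j => some j
  | .kill j _ => some j

open Classical in
/-- The effect of a letter on a token; `none` means that the token dies. -/
noncomputable def step (D : EdgeDesign J V L) : Letter J V → Tok J V → Option (Tok J V)
  | .swap j, .dart j' t => if j' = j then some (.dart j (!t)) else none
  | .push j t, .dart j' t' => if j' = j ∧ t' = !t then some (.dart j t) else none
  | .release j, .dart j' t => if j' = j then some (.vertex (D.source j t)) else none
  | .split v j, .vertex u => some (.dart j (decide (u = v)))
  | .kill j t, .vertex u =>
    if u = D.source j t then none else some (.dart j (decide (u ∈ D.block (D.label j t))))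
  | _, _ => none

theorem cls_of_step {D : EdgeDesign J V L} {a : Letter J V} {x y : Tok J V}
    (h : D.step a x = some y) : x.cls = a.src ∧ y.cls = a.tgt := by
  cases a <;> cases x <;> grind [step, Tok.cls, Letter.src, Letter.tgt]

/-- The token system of an edge design. -/
noncomputable abbrev system (D : EdgeDesign J V L) :
    TokenSystem (Letter J V) (Option J) (Tok J V) where
  src := Letter.src
  tgt := Letter.tgt
  step := D.step

variable (D : EdgeDesign J V L)

theorem step_swap (j : J) (t : Bool) : D.step (.swap j) (.dart j t) = some (.dart j (!t)) :=
  if_pos rfl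

theorem step_release (j : J) (t : Bool) :
    D.step (.release j) (.dart j t) = some (.vertex (D.source j t)) :=
  if_pos rfl

theorem eq_of_forall_source_eq {j j' : J} (h : ∀ t', ∃ t, D.source j' t' = D.source j t) :
    j = j' := by
  by_contra hne
  obtain ⟨t, ht⟩ := h true
  obtain ⟨u, hu⟩ := h false
  obtain rfl : u = !t := by
    by_contra hut
    have : u = t := by simpa using hut
    exact D.source_ne j' true (ht.trans (this ▸ hu.symm))
  exact D.not_mem_opposite ht.symm hne (hu ▸ D.source_mem j _ _)

theorem nonempty_lang [Nonempty J] (c : Option J) : (D.system.lang c).Nonempty := by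
  suffices h : ∃ a : Letter J V, a.src ≠ c by
    obtain ⟨a, ha⟩ := h
    exact ⟨fun _ => a, fun hw => absurd hw.1 ha⟩
  cases c with
  | some j => exact ⟨.kill j true, by simp [Letter.src]⟩
  | none => exact ⟨.swap (Classical.arbitrary J), by simp [Letter.src]⟩

theorem lang_ne_univ [Nonempty J] (c : Option J) : D.system.lang c ≠ Set.univ := by
  have hswap (j : J) : (fun _ => .swap j) ∉ D.system.lang (some j) := fun hw =>
    hw ⟨rfl, fun _ => rfl⟩ ⟨fun n => .dart j n.bodd, .of_forall fun n =>
      (D.step_swap j _).trans (congrArg (fun t => some (Tok.dart j t)) (Nat.bodd_succ n).symm)⟩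
  rw [Set.ne_univ_iff_exists_notMem]
  cases c with
  | some j => exact ⟨_, hswap j⟩
  | none =>
    let j := Classical.arbitrary J
    exact ⟨consWord (.split (D.source j true) j) fun _ => .swap j, fun hw =>
      hswap j (TokenSystem.consWord_mem_lang.1 hw rfl)⟩

/-! ### The history-deterministic automaton -/

section UpperBound

/-- The states of the history-deterministic automaton: following a single token, following all
tokens in a room, following the tokens in a block of vertices, and rest of an illegal word. -/
inductive State (J V L : Type) : Type
  | token : Tok J V → State J V L
  | room : J → State J V L
  | block : L → State J V L
  | illegal : State J V L
  deriving Fintype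

/-- The class of the followed tokens, if any. -/
def State.cls : State J V L → Option (Option J)
  | .token x => some x.cls
  | .room j => some (some j)
  | .block _ => some none
  | .illegal => none

/-- The state in which the automaton follows all tokens of a class; the value at `none` is junk,
since no letter leading to the hall kills a token living in its source class. -/
def State.all : Option J → State J V L
  | some j => .room j
  | none => .illegal

open Classical in
/-- The transition on a letter legal for the state. The Boolean resolves the only nondeterminism,
the choice of one of the two labels upon `release`. -/
noncomputable def legalMove (t : Bool) : State J V L → Letter J V → State J V L
  | .token x, a => (D.step a x).elim (.all a.tgt) .token
  | .room j, .push _ u => .token (.dart j u)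
  | .room j, .release _ => .block (D.label j t)
  | .room j, _ => .room j
  | .block ℓ, .kill j u =>
    if D.label j u = ℓ then .token (.dart j true)
    else if ∃ j' u', D.source j' u' = D.source j u ∧ D.label j' u' = ℓ then .token (.dart j false)
    else .room j
  | .block _, a => .all a.tgt
  | .illegal, _ => .illegal

open Classical in
/-- The transition function, depending on the choice `t` of a dart. -/
noncomputable def move (t : Bool) (q : State J V L) (a : Letter J V) : State J V L :=
  if q.cls = some a.src then D.legalMove t q a else .illegal

/-- The significant transitions: the followed token dies, or the word is illegal. -/
def IsSig : State J V L → Letter J V → Prop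
  | .illegal, _ => True
  | .token x, a => x.cls = a.src ∧ D.step a x = none
  | _, _ => False

/-- The history-deterministic automaton of an edge design, starting in the room of `j₀`. -/
noncomputable def automaton (j₀ : J) : BuchiAutomaton (Letter J V) (State J V L) where
  init := .room j₀
  trans := {(q, a, q') | ∃ t, q' = D.move t q a}
  sig := {(q, a, q') | (∃ t, q' = D.move t q a) ∧ D.IsSig q a}
  sig_sub _ h := h.1

variable {D} {q : State J V L} {a : Letter J V} {x y : Tok J V} {t : Bool}

theorem tgt_ne_none_of_step_eq_none (hx : x.cls = a.src) (h : D.step a x = none) :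
    a.tgt ≠ none := by
  cases a <;> cases x <;> grind [step, Tok.cls, Letter.src, Letter.tgt]

theorem State.cls_all {c : Option J} (hc : c ≠ none) :
    (State.all c : State J V L).cls = some c := by
  cases c
  · contradiction
  · rfl

theorem move_of_cls_ne (h : q.cls ≠ some a.src) : D.move t q a = .illegal := if_neg h

theorem cls_move (h : q.cls = some a.src) : (D.move t q a).cls = some a.tgt := by
  rw [move, if_pos h]
  cases q with
  | token x =>
    replace h : x.cls = a.src := Option.some.inj h
    cases hs : D.step a x with
    | some y => simpa [legalMove, hs, State.cls] using (cls_of_step hs).2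
    | none => simpa [legalMove, hs] using State.cls_all (tgt_ne_none_of_step_eq_none h hs)
  | room j => cases a <;> simp_all [State.cls, legalMove, Letter.src, Letter.tgt, Tok.cls]
  | block ℓ =>
    cases a with
    | split v j => rfl
    | kill j u => simp only [legalMove]; split_ifs <;> rfl
    | _ => cases h
  | illegal => cases h

/-- The tokens followed by a state. -/
def Covers (D : EdgeDesign J V L) : State J V L → Set (Tok J V)
  | .token x => {x}
  | .room j => {x | x.cls = some j}
  | .block ℓ => .vertex '' D.block ℓ
  | .illegal => ∅

theorem covers_move (hx : x ∈ D.Covers q) (hq : q.cls = some a.src) (h : D.step a x = some y) :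
    ¬ D.IsSig q a ∧ y ∈ D.Covers (D.move t q a) := by
  rw [move, if_pos hq]
  have hy := (cls_of_step h).2
  cases q with
  | token z =>
    obtain rfl : x = z := hx
    simp [IsSig, legalMove, h, Covers]
  | room j =>
    refine ⟨id, ?_⟩
    cases a <;> cases x <;>
      grind [step, legalMove, Covers, Tok.cls, State.cls, Letter.src, Letter.tgt, D.source_mem]
  | block ℓ =>
    refine ⟨id, ?_⟩
    obtain ⟨v, hv, rfl⟩ := hx
    cases a with
    | split u j => exact hy
    | kill j u =>
      classical
      obtain ⟨hv', rfl⟩ : v ≠ D.source j u ∧ .dart j (decide (v ∈ D.block (D.label j u))) = y := by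
        simpa [step] using h
      simp only [legalMove]
      split_ifs with h₁ h₂
      · simp [Covers, h₁, hv]
      · obtain ⟨j', u', hsource, rfl⟩ := h₂
        have : v ∉ D.block (D.label j u) := fun hmem =>
          hv' (D.mem_star hsource.symm (fun he => h₁ (by grind)) hmem hv)
        simp [Covers, this]
      · exact hy
    | _ => cases hq
  | illegal => exact hx.elim

theorem covers_move_of_isSig (hq : q.cls = some a.src) (h : D.IsSig q a) (hy : y.cls = a.tgt) :
    y ∈ D.Covers (D.move t q a) := by
  rw [move, if_pos hq]
  cases q with
  | token x =>
    obtain ⟨hx, hs⟩ := h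
    obtain ⟨j, hj⟩ := Option.ne_none_iff_exists'.1 (tgt_ne_none_of_step_eq_none hx hs)
    simpa [legalMove, hs, hj, State.all, Covers] using hy
  | room j => exact h.elim
  | block ℓ => exact h.elim
  | illegal => cases hq

theorem lang_automaton_subset (j₀ : J) : (D.automaton j₀).Lang ⊆ D.system.lang (some j₀) := by
  rintro w ⟨ρ, ⟨h₀, hρ⟩, hacc⟩ ⟨hw₀, hw⟩
  have hcls (n : ℕ) : (ρ n).cls = some (w n).src := by
    induction n with
    | zero => exact (congrArg State.cls h₀).trans (congrArg some hw₀.symm)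
    | succ n ih =>
      obtain ⟨t, ht⟩ := hρ n
      exact (congrArg State.cls ht).trans ((cls_move ih).trans (congrArg some (hw n).symm))
  refine TokenSystem.not_immortal_of_frequently_reset (E := fun n => D.Covers (ρ n))
    (R := fun n => D.IsSig (ρ n) (w n)) (fun n x hx y h => ?_) (fun n x y hR h => ?_)
    ((BuchiAutomaton.buchiAcc_iff_frequently.1 hacc).mono fun n h => h.2)
  all_goals obtain ⟨t, ht : ρ (n + 1) = _⟩ := hρ n; rw [ht]
  · exact covers_move hx (hcls n) h
  · exact covers_move_of_isSig (hcls n) hR (cls_of_step h).2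

/-- The dart chosen by the resolver when its memory contains the given token. -/
def Tok.choice : Tok J V → Bool
  | .dart _ t => t
  | .vertex _ => true

/-- The resolver guesses an immortal token and follows its own guess. It gives up the guess
when the guess dies or the automaton commits to a token. -/
noncomputable def resolver (D : EdgeDesign J V L) (j₀ : J) :
    (D.automaton j₀).MemoryResolver (Tok J V) where
  start := .dart j₀ true
  move m q a := D.move m.choice q a
  update m a
    | .token y => y
    | .room j => (D.step a m).getD (.dart j true)
    | _ => (D.step a m).getD m
  move_mem m _ _ := ⟨m.choice, rfl⟩

/-- The guess `m` of the resolver is possible in the given state. -/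
def Consistent (D : EdgeDesign J V L) (m : Tok J V) : State J V L → Prop
  | .token x => m = x
  | .room j => m.cls = some j
  | .block ℓ => ∃ j t, m = .vertex (D.source j t) ∧ D.label j t = ℓ
  | .illegal => True

/-- The state follows a single token. -/
def State.IsToken : State J V L → Prop
  | .token _ => True
  | _ => False

variable {m : Tok J V} {j₀ : J} {w : ℕ → Letter J V}

theorem consistent_move (hm : D.Consistent m q) (hq : q.cls = some a.src) :
    D.Consistent ((D.resolver j₀).update m a (D.move m.choice q a)) (D.move m.choice q a) := by
  rcases hq' : D.move m.choice q a with x | j | ℓ | _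
  · rfl
  · have hj : a.tgt = some j :=
      Option.some.inj ((cls_move hq).symm.trans (congrArg State.cls hq'))
    cases hs : D.step a m with
    | none => simp [resolver, Consistent, hs, Tok.cls]
    | some y => simp [resolver, Consistent, hs, (cls_of_step hs).2, hj]
  · rw [move, if_pos hq] at hq'
    cases q with
    | room j =>
      cases a <;> cases m <;>
        grind [legalMove, Consistent, Tok.cls, State.cls, Letter.src, step, resolver, Tok.choice]
    | token x =>
      cases hs : D.step a x with
      | none => cases ht : a.tgt <;> simp [legalMove, hs, ht, State.all] at hq'
      | some y => simp [legalMove, hs] at hq'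
    | block ℓ =>
      cases a with
      | kill j u => simp only [legalMove] at hq'; split_ifs at hq'
      | split v j => cases hq'
      | _ => cases hq
    | illegal => cases hq'
  · trivial

theorem State.IsToken.move (h : q.IsToken) (hq : q.cls = some a.src) (hsig : ¬ D.IsSig q a) :
    (D.move t q a).IsToken := by
  rw [EdgeDesign.move, if_pos hq]
  cases q with
  | token x =>
    cases hs : D.step a x with
    | none => exact absurd ⟨Option.some.inj hq, hs⟩ hsig
    | some y => simp [legalMove, hs, IsToken]
  | _ => exact h.elim

theorem step_guess (hm : D.Consistent m q) (hq : q.cls = some a.src) (hsig : ¬ D.IsSig q a)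
    (hq' : (D.move m.choice q a).IsToken → q.IsToken) :
    D.step a m = some ((D.resolver j₀).update m a (D.move m.choice q a)) := by
  rw [move, if_pos hq] at hq' ⊢
  cases q with
  | token x =>
    obtain rfl : m = x := hm
    cases hs : D.step a m with
    | none => exact absurd ⟨Option.some.inj hq, hs⟩ hsig
    | some y => simp [legalMove, hs, resolver]
  | room j =>
    cases a <;> cases m <;>
        grind [legalMove, Consistent, Tok.cls, State.cls, Letter.src, step, resolver, State.IsToken]
  | block ℓ =>
    obtain ⟨j, t, rfl, rfl⟩ := hm
    cases a with
    | split v j' => rfl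
    | kill j' u =>
      have hroom : D.legalMove true (.block (D.label j t)) (.kill j' u) = .room j' := by
        simp only [legalMove] at hq' ⊢
        split_ifs at hq' ⊢ <;> first | rfl | exact (hq' trivial).elim
      have hsource : D.source j t ≠ D.source j' u := fun he => by
        simp only [legalMove] at hroom
        split_ifs at hroom with h₁ h₂
        exact h₂ ⟨j, t, he, rfl⟩
      simp [Tok.choice, hroom, resolver, step, hsource]
    | _ => cases hq
  | illegal => cases hq

theorem cls_play (h : ∃ᶠ n in atTop, ¬ D.IsSig ((D.resolver j₀).play w n).1 (w n)) (n : ℕ) :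
    ((D.resolver j₀).play w n).1.cls = some (w n).src := by
  by_contra hn
  have hillegal (k : ℕ) (hk : n + 1 ≤ k) : ((D.resolver j₀).play w k).1 = .illegal := by
    induction k, hk using Nat.le_induction with
    | base => exact move_of_cls_ne hn
    | succ k _ ih => exact move_of_cls_ne (by rw [ih]; nofun)
  obtain ⟨k, hk, hsig⟩ := frequently_atTop.1 h (n + 1)
  exact hsig (hillegal k hk ▸ trivial)

theorem consistent_play (h : ∀ n, ((D.resolver j₀).play w n).1.cls = some (w n).src) (n : ℕ) :
    D.Consistent ((D.resolver j₀).play w n).2 ((D.resolver j₀).play w n).1 := by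
  induction n with
  | zero => rfl
  | succ n ih => exact consistent_move (j₀ := j₀) ih (h n)

theorem buchiAcc_play (hw : w ∈ D.system.lang (some j₀)) :
    (D.automaton j₀).BuchiAcc w fun n => ((D.resolver j₀).play w n).1 := by
  set x := (D.resolver j₀).play w
  rw [BuchiAutomaton.buchiAcc_iff_frequently]
  suffices h : ∃ᶠ n in atTop, D.IsSig (x n).1 (w n) from
    h.mono fun n hn => ⟨⟨(x n).2.choice, rfl⟩, hn⟩
  by_contra hacc
  have hsig : ∀ᶠ n in atTop, ¬ D.IsSig (x n).1 (w n) := not_frequently.1 hacc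
  have hcls := cls_play hsig.frequently
  have hlegal : D.system.Legal (some j₀) w :=
    ⟨(Option.some.inj (hcls 0)).symm, fun n =>
      Option.some.inj ((hcls (n + 1)).symm.trans (cls_move (hcls n)))⟩
  refine hw hlegal ⟨fun n => (x n).2, ?_⟩
  have htoken : ∀ᶠ n in atTop, (x (n + 1)).1.IsToken → (x n).1.IsToken :=
    eventually_of_succ_of_eventually_succ (P := fun n => (x n).1.IsToken)
      (hsig.mono fun n hn ht => State.IsToken.move (D := D) ht (hcls n) hn)
  filter_upwards [hsig, htoken] with n hn hn'
  exact step_guess (j₀ := j₀) (consistent_play hcls n) (hcls n) hn hn'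

theorem lang_automaton_and_historyDeterministic (D : EdgeDesign J V L) (j₀ : J) :
    (D.automaton j₀).Lang = D.system.lang (some j₀) ∧ (D.automaton j₀).HistoryDeterministic :=
  (D.resolver j₀).lang_eq_and_historyDeterministic (lang_automaton_subset j₀)
    fun _ => buchiAcc_play

theorem card_state_le [Fintype J] [Fintype V] [Fintype L] :
    Fintype.card (State J V L) ≤ 3 * Fintype.card J + Fintype.card V + Fintype.card L + 1 := by
  let f : (J × Bool ⊕ V) ⊕ J ⊕ L ⊕ Unit → State J V L :=
    Sum.elim (fun x => .token (Sum.elim (fun d => .dart d.1 d.2) .vertex x))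
      (Sum.elim .room (Sum.elim .block fun _ => .illegal))
  have hf : Function.Surjective f := by
    rintro ((⟨j, t⟩ | v) | j | ℓ | _)
    exacts [⟨.inl (.inl (j, t)), rfl⟩, ⟨.inl (.inr v), rfl⟩, ⟨.inr (.inl j), rfl⟩,
      ⟨.inr (.inr (.inl ℓ)), rfl⟩, ⟨.inr (.inr (.inr ())), rfl⟩]
  have hcard := Fintype.card_le_of_surjective f hf
  simp only [Fintype.card_sum, Fintype.card_prod, Fintype.card_bool, Fintype.card_unit] at hcard
  omega

end UpperBound

/-! ### The lower bound for deterministic automata -/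

/-- The deterministic recognizers of the languages of an edge design. -/
abbrev Recognizer (D : EdgeDesign J V L) (Q : Type) : Type := D.system.Recognizer Q

namespace Recognizer

variable {D} {Q : Type} (M : D.Recognizer Q) {j j' : J} {t t' : Bool} {b b' q : Q}

theorem exists_hasClass (j : J) : ∃ q, M.HasClass (some j) q := by
  have hkill {q : Q} (hq : M.HasClass none q) : ∃ q, M.HasClass (some j) q :=
    ⟨_, M.hasClass_next (a := Letter.kill j true) hq⟩
  obtain ⟨_ | j', hq⟩ := M.exists_hasClass_init
  · exact hkill hq
  · exact hkill (M.hasClass_next (a := Letter.release j') hq)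

/-- The hall state in which the recognizer lands after releasing the darts of `j`. -/
def drop (j : J) (q : Q) : Q := M.next q (.release j)

/-- The states of the room of `j`. -/
def states (j : J) : Set Q := {q | M.HasClass (some j) q}

variable {M}

theorem disjoint_states (h : j ≠ j') : Disjoint (M.states j) (M.states j') :=
  Set.disjoint_left.2 fun _ hq hq' => h (Option.some.inj (M.hasClass_unique hq hq'))

theorem hasClass_next_swap (hq : M.HasClass (some j) q) :
    M.HasClass (some j) (M.next q (.swap j)) :=
  M.hasClass_next (a := Letter.swap j) hq

theorem hasClass_drop (hq : M.HasClass (some j) q) : M.HasClass none (M.drop j q) :=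
  M.hasClass_next (a := Letter.release j) hq

variable (M) [Nonempty J]

/-- The least rank of a dart. -/
noncomputable def minRank : ℕ :=
  sInf {n | ∃ j t q, M.HasClass (some j) q ∧ M.rank q (.dart j t) = n}

/-- The least `n` such that in some state of the room of `j` both darts have rank at most `n`. -/
noncomputable def level (j : J) : ℕ :=
  sInf {n | ∃ q, M.HasClass (some j) q ∧ ∀ t, M.rank q (.dart j t) ≤ n}

/-- The states of the room of `j` in which both darts have rank at most `M.level j`. -/
def core (j : J) : Set Q :=
  {q | M.HasClass (some j) q ∧ ∀ t, M.rank q (.dart j t) ≤ M.level j}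

/-- Only the dart `(j, t)` has the least possible rank in `q`. -/
def Pointed (j : J) (q : Q) (t : Bool) : Prop :=
  M.rank q (.dart j t) = M.minRank ∧ M.rank q (.dart j (!t)) ≠ M.minRank

/-- The states of the room of `j` in which both or none of the darts have the least possible
rank. -/
def balanced (j : J) : Set Q := {q ∈ M.states j | ∀ t, ¬ M.Pointed j q t}

/-- The adversary can kill the dart `(j, t)` in the state `b` by releasing it: this takes no
significant transition and leads back to the core. -/
def Avail (j : J) (b : Q) (t : Bool) : Prop :=
  ¬ M.sig (M.drop j b) (.kill j t) ∧ M.next (M.drop j b) (.kill j t) ∈ M.core j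

/-- The drop of `b` is shared with another edge, which thus provides a decoy for the kills of
`j`. -/
def Shared (j : J) (b : Q) : Prop :=
  ∃ j' ≠ j, ∃ b' ∈ M.core j', M.drop j b = M.drop j' b' ∧ M.level j' ≤ M.level j ∧
    ((∃ t, M.Pointed j b t) → ∃ t', M.Pointed j' b' t')

/-- The hall states reserved for `j`: the drops that no other edge shares. -/
def drops (j : J) : Set Q := M.drop j '' {b ∈ M.core j | ¬ M.Shared j b}

variable {M}

theorem disjoint_states_drops (j j' : J) : Disjoint (M.states j) (M.drops j') := by
  rw [Set.disjoint_left]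
  rintro _ hq ⟨b, ⟨hb, -⟩, rfl⟩
  exact Option.some_ne_none j (M.hasClass_unique hq (hasClass_drop hb.1))

theorem exists_pointed_of_notMem_balanced (hq : M.HasClass (some j) q) (h : q ∉ M.balanced j) :
    ∃ t, M.Pointed j q t := by
  by_contra! hno
  exact h ⟨hq, hno⟩

theorem minRank_le (hq : M.HasClass (some j) q) (t : Bool) : M.minRank ≤ M.rank q (.dart j t) :=
  Nat.sInf_le ⟨j, t, q, hq, rfl⟩

theorem core_nonempty (j : J) : (M.core j).Nonempty := by
  refine Nat.sInf_mem (s := {n | ∃ q, M.HasClass (some j) q ∧ ∀ t, M.rank q (.dart j t) ≤ n}) ?_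
  obtain ⟨q, hq⟩ := M.exists_hasClass j
  exact ⟨_, q, hq, Bool.forall_bool.2 ⟨le_max_left _ _, le_max_right _ _⟩⟩

theorem exists_level_le (hq : M.HasClass (some j) q) : ∃ t, M.level j ≤ M.rank q (.dart j t) := by
  by_contra! hlt
  have hle : M.level j ≤ M.level j - 1 := Nat.sInf_le ⟨q, hq, fun t => Nat.le_pred_of_lt (hlt t)⟩
  have := hlt true
  omega

theorem Pointed.eq_of_rank_eq (h : M.Pointed j q t) (h' : M.rank q (.dart j t') = M.minRank) :
    t' = t := by
  by_contra hne
  obtain rfl : t' = !t := Bool.eq_not.2 hne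
  exact h.2 h'

theorem Pointed.minRank_lt_level (hb : b ∈ M.core j) (h : M.Pointed j b t) :
    M.minRank < M.level j :=
  ((minRank_le hb.1 _).lt_of_ne' h.2).trans_le (hb.2 _)

variable [Finite J] [Finite V] [Finite Q]

theorem rank_drop_le_rank (hq : M.HasClass (some j) q) (t : Bool) :
    M.rank (M.drop j q) (.vertex (D.source j t)) ≤ M.rank q (.dart j t) :=
  M.rank_next_le (a := Letter.release j) hq (D.step_release j t)

theorem rank_next_swap_le (hq : M.HasClass (some j) q) (t : Bool) :
    M.rank (M.next q (.swap j)) (.dart j (!t)) ≤ M.rank q (.dart j t) :=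
  M.rank_next_le (a := Letter.swap j) hq (D.step_swap j t)

theorem rank_next_swap_eq_minRank (hq : M.HasClass (some j) q)
    (h : M.rank q (.dart j t) = M.minRank) :
    M.rank (M.next q (.swap j)) (.dart j (!t)) = M.minRank :=
  ((rank_next_swap_le hq t).trans h.le).antisymm (minRank_le (hasClass_next_swap hq) _)

theorem exists_rank_eq_minRank (j : J) (t : Bool) :
    ∃ q, M.HasClass (some j) q ∧ M.rank q (.dart j t) = M.minRank := by
  obtain ⟨j₀, t₀, q, hq, hmin⟩ :=
    Nat.sInf_mem (s := {n | ∃ j t q, M.HasClass (some j) q ∧ M.rank q (.dart j t) = n})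
      ⟨_, j, t, _, (M.exists_hasClass j).choose_spec, rfl⟩
  have htrue : ∃ q, M.HasClass (some j) q ∧ M.rank q (.dart j true) = M.minRank := by
    let a : Letter J V := .split (D.source j₀ t₀) j
    have hq' : M.HasClass (some j) (M.next (M.drop j₀ q) a) :=
      M.hasClass_next (a := a) (hasClass_drop hq)
    have hstep : D.step a (.vertex (D.source j₀ t₀)) = some (.dart j true) := by simp [a, step]
    exact ⟨_, hq', (((M.rank_next_le (a := a) (hasClass_drop hq) hstep).trans
      (rank_drop_le_rank hq t₀)).trans hmin.le).antisymm (minRank_le hq' _)⟩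
  cases t with
  | true => exact htrue
  | false =>
    exact htrue.imp' _ fun q h => ⟨hasClass_next_swap h.1, rank_next_swap_eq_minRank h.1 h.2⟩

/-- A letter cannot be significant if no dart increases its rank beyond the level: otherwise
both darts would end up strictly below it. -/
theorem not_sig_and_next_mem_core {a : Letter J V} (hq : M.HasClass a.src q) (ha : a.tgt = some j)
    (h : ∀ t, ∃ x, D.step a x = some (.dart j t) ∧ M.rank q x ≤ M.level j) :
    ¬ M.sig q a ∧ M.next q a ∈ M.core j := by
  have hnext : M.HasClass (some j) (M.next q a) := ha ▸ M.hasClass_next (a := a) hq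
  refine ⟨fun hsig => ?_, hnext, fun t => ?_⟩
  · obtain ⟨t, hle⟩ := exists_level_le hnext
    obtain ⟨x, hx, hr⟩ := h t
    exact ((M.rank_next_lt hq hx hsig).trans_le hr).not_ge hle
  · obtain ⟨x, hx, hr⟩ := h t
    exact (M.rank_next_le hq hx).trans hr

theorem not_sig_and_next_swap_mem_core (hb : b ∈ M.core j) :
    ¬ M.sig b (.swap j) ∧ M.next b (.swap j) ∈ M.core j :=
  not_sig_and_next_mem_core (a := Letter.swap j) hb.1 rfl fun t =>
    ⟨.dart j (!t), by rw [step_swap, Bool.not_not], hb.2 _⟩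

theorem not_sig_push (hq : M.HasClass (some j) q)
    (hmin : M.rank q (.dart j (!t)) = M.minRank) :
    ¬ M.sig q (.push j t) ∧ M.HasClass (some j) (M.next q (.push j t)) ∧
      M.rank (M.next q (.push j t)) (.dart j t) = M.minRank := by
  have hnext : M.HasClass (some j) (M.next q (.push j t)) :=
    M.hasClass_next (a := Letter.push j t) hq
  have hstep : D.step (.push j t) (.dart j (!t)) = some (.dart j t) := if_pos ⟨rfl, rfl⟩
  have hle := minRank_le hnext t
  exact ⟨fun hsig => hle.not_gt (hmin ▸ M.rank_next_lt (a := Letter.push j t) hq hstep hsig), hnext,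
    (hmin ▸ M.rank_next_le (a := Letter.push j t) hq hstep).antisymm hle⟩

theorem exists_pointed (j : J) (t : Bool) : ∃ q, M.HasClass (some j) q ∧ M.Pointed j q t := by
  by_contra! hno
  obtain ⟨q, hq, hbad⟩ := M.exists_not_sigReaches_breakpoint
    (X := {q | M.HasClass (some j) q ∧ M.rank q (.dart j t) = M.minRank})
    (exists_rank_eq_minRank j t)
  have hother {q} (hq : M.HasClass (some j) q ∧ M.rank q (.dart j t) = M.minRank) :
      M.rank q (.dart j (!t)) = M.minRank :=
    not_not.1 fun h => hno q hq.1 ⟨hq.2, h⟩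
  have h₁ := not_sig_push hq.1 (hother hq)
  have h₂ := not_sig_push h₁.2.1 (hother h₁.2)
  have hpush (x : Tok J V) (y : Tok J V) (h : D.step (.push j t) x = some y) : y = .dart j t := by
    cases x <;> grind [step]
  refine hbad (.of_mem_trans (a := Letter.push j t) (q := (_, {.dart j t}))
    ⟨hq.1, h₁.1, rfl, fun x _ => hpush x⟩ (.of_mem_sig (a := Letter.push j t) (q := (_, Set.univ))
      ⟨⟨h₁.2.1, h₂.1, rfl, fun _ _ _ _ => trivial⟩, ?_, rfl⟩ (Set.mk_mem_prod h₂.2 rfl)))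
  rintro _ rfl
  simp [step]

theorem rank_drop_le (hb : b ∈ M.core j) (t : Bool) :
    M.rank (M.drop j b) (.vertex (D.source j t)) ≤ M.level j :=
  (rank_drop_le_rank hb.1 t).trans (hb.2 t)

theorem Pointed.rank_drop_le_minRank (hb : b ∈ M.core j) (h : M.Pointed j b t) :
    M.rank (M.drop j b) (.vertex (D.source j t)) ≤ M.minRank :=
  (rank_drop_le_rank hb.1 t).trans h.1.le

theorem level_le_rank_or_level_le_rank (hq : M.HasClass none q) (j : J) {u v : V} (h : u ≠ v) :
    M.level j ≤ M.rank q (.vertex u) ∨ M.level j ≤ M.rank q (.vertex v) := by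
  let a : Letter J V := .split u j
  have hu := M.rank_next_le (a := a) (x := .vertex u) (y := .dart j true) hq
    (by simp [a, step])
  have hv := M.rank_next_le (a := a) (x := .vertex v) (y := .dart j false) hq
    (by simp [a, step, h.symm])
  obtain ⟨_ | _, ht⟩ := exists_level_le (M.hasClass_next (a := a) hq)
  · exact .inr (ht.trans hv)
  · exact .inl (ht.trans hu)

theorem Pointed.level_le_rank_drop (hb : b ∈ M.core j) (h : M.Pointed j b t) {v : V}
    (hv : v ≠ D.source j t) : M.level j ≤ M.rank (M.drop j b) (.vertex v) :=
  (level_le_rank_or_level_le_rank (hasClass_drop hb.1) j hv).resolve_right fun hle =>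
    (hle.trans (h.rank_drop_le_minRank hb)).not_gt (h.minRank_lt_level hb)

theorem not_sig_release (hb : b ∈ M.core j) : ¬ M.sig b (.release j) := by
  intro hsig
  have hlt (t : Bool) : M.rank (M.drop j b) (.vertex (D.source j t)) < M.level j :=
    (M.rank_next_lt (a := Letter.release j) hb.1 (D.step_release j t) hsig).trans_le (hb.2 t)
  rcases level_le_rank_or_level_le_rank (hasClass_drop hb.1) j (D.source_ne j true) with h | h
  · exact (hlt true).not_ge h
  · exact (hlt false).not_ge h

theorem avail_of_decoy (hb : b ∈ M.core j) {v : V} (hv : v ∉ D.block (D.label j t))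
    (hr : M.rank (M.drop j b) (.vertex v) ≤ M.level j) : M.Avail j b t := by
  refine not_sig_and_next_mem_core (a := Letter.kill j t) (hasClass_drop hb.1) rfl fun u => ?_
  cases u with
  | true =>
    refine ⟨.vertex (D.source j (!t)), ?_, rank_drop_le hb _⟩
    simp [step, D.source_mem j (!t) t, (D.source_ne j t).symm]
  | false =>
    have hne : v ≠ D.source j t := fun h => hv (h ▸ D.source_mem j t t)
    exact ⟨.vertex v, by simp [step, hv, hne], hr⟩

theorem level_le_of_pointed (hb : b ∈ M.core j) (hb' : b' ∈ M.core j')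
    (hdrop : M.drop j b = M.drop j' b') (h : M.Pointed j' b' t') : M.level j' ≤ M.level j := by
  obtain ⟨t, ht⟩ : ∃ t, D.source j t ≠ D.source j' t' := by
    by_contra! h
    exact D.source_ne j true ((h true).trans (h false).symm)
  exact (h.level_le_rank_drop hb' ht).trans (hdrop ▸ rank_drop_le hb t)

theorem shared_or_shared (hne : j ≠ j') (hb : b ∈ M.core j) (hb' : b' ∈ M.core j')
    (hdrop : M.drop j b = M.drop j' b') : M.Shared j b ∨ M.Shared j' b' := by
  by_cases h' : ∃ t', M.Pointed j' b' t'
  · obtain ⟨t', ht'⟩ := h'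
    exact .inl ⟨j', hne.symm, b', hb', hdrop, level_le_of_pointed hb hb' hdrop ht',
      fun _ => ⟨t', ht'⟩⟩
  by_cases h : ∃ t, M.Pointed j b t
  · obtain ⟨t, ht⟩ := h
    exact .inr ⟨j, hne, b, hb, hdrop.symm, level_le_of_pointed hb' hb hdrop.symm ht,
      fun _ => ⟨t, ht⟩⟩
  rcases le_total (M.level j') (M.level j) with hle | hle
  · exact .inl ⟨j', hne.symm, b', hb', hdrop, hle, fun h₀ => (h h₀).elim⟩
  · exact .inr ⟨j, hne, b, hb, hdrop.symm, hle, fun h₀ => (h' h₀).elim⟩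

theorem Pointed.source_eq (hb : b ∈ M.core j) (hb' : b' ∈ M.core j')
    (hdrop : M.drop j b = M.drop j' b') (h : M.Pointed j b t) (h' : M.Pointed j' b' t') :
    D.source j t = D.source j' t' := by
  by_contra hne
  have hle := (h.level_le_rank_drop hb (Ne.symm hne)).trans_eq (by rw [hdrop])
  exact ((h'.rank_drop_le_minRank hb').trans_lt (h.minRank_lt_level hb)).not_ge hle

theorem Shared.avail_of_pointed (hb : b ∈ M.core j) (h : M.Shared j b) (ht : M.Pointed j b t)
    (u : Bool) : M.Avail j b u := by
  obtain ⟨j', hne, b', hb', hdrop, hlevel, hpointed⟩ := h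
  obtain ⟨t', ht'⟩ := hpointed ⟨t, ht⟩
  have hsource := ht.source_eq hb hb' hdrop ht'
  refine avail_of_decoy hb (v := D.source j' (!t')) ?_
    (hdrop ▸ (rank_drop_le hb' (!t')).trans hlevel)
  rcases Bool.eq_or_eq_not u t with rfl | rfl
  · exact fun hmem => D.source_ne j' t' (hsource.symm.trans
      (D.mem_star hsource (by simp [hne.symm]) hmem (D.source_mem j' _ _)).symm)
  · exact D.not_mem_opposite hsource hne.symm

theorem Shared.exists_avail (hb : b ∈ M.core j) (h : M.Shared j b) : ∃ t, M.Avail j b t := by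
  obtain ⟨j', hne, b', hb', hdrop, hlevel, -⟩ := h
  by_contra! hno
  refine hne (D.eq_of_forall_source_eq fun t' => D.mem_both fun t => ?_).symm
  by_contra hmem
  exact hno t (avail_of_decoy hb hmem (hdrop ▸ (rank_drop_le hb' t').trans hlevel))

section Adversary

variable {Y : Set (Q × Set (Tok J V))}

theorem sigReaches_of_swap (hb : b ∈ M.core j) {E E' : Set (Tok J V)}
    (hE : ∀ x ∈ E, ∀ y, D.step (.swap j) x = some y → y ∈ E')
    (h : M.breakpoint.SigReaches Y (M.next b (.swap j), E')) :
    M.breakpoint.SigReaches Y (b, E) :=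
  .of_mem_trans (a := Letter.swap j) ⟨hb.1, (not_sig_and_next_swap_mem_core hb).1, rfl, hE⟩ h

theorem sigReaches_singleton_of_avail (hb : b ∈ M.core j) (h : M.Avail j b t) :
    M.breakpoint.SigReaches (M.core j ×ˢ {Set.univ}) (b, {.dart j t}) := by
  refine .of_mem_trans (a := Letter.release j) (q := (M.drop j b, {.vertex (D.source j t)}))
    ⟨hb.1, not_sig_release hb, rfl, ?_⟩ (.of_mem_sig (a := Letter.kill j t) (q := (_, Set.univ))
      ⟨⟨hasClass_drop hb.1, h.1, rfl, fun _ _ _ _ => trivial⟩, ?_, rfl⟩ (Set.mk_mem_prod h.2 rfl))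
  · rintro _ rfl y hy
    exact (Option.some.inj ((D.step_release j t).symm.trans hy)).symm
  · rintro _ rfl
    simp [step]

theorem sigReaches_univ_of_avail (hb : b ∈ M.core j) (h : M.Avail j b t)
    (hY : ∀ b ∈ M.core j, M.breakpoint.SigReaches Y (b, {.dart j true})) :
    M.breakpoint.SigReaches Y (b, Set.univ) := by
  refine .of_mem_trans (a := Letter.release j)
    (q := (M.drop j b, Set.range fun u => .vertex (D.source j u)))
    ⟨hb.1, not_sig_release hb, rfl, fun x _ y hy => ?_⟩ (.of_mem_trans (a := Letter.kill j t)
      (q := (_, {.dart j true})) ⟨hasClass_drop hb.1, h.1, rfl, ?_⟩ (hY _ h.2))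
  · cases x with
    | dart j' u =>
      obtain ⟨-, rfl⟩ : j' = j ∧ .vertex (D.source j u) = y := by simpa [step] using hy
      exact ⟨u, rfl⟩
    | vertex v => exact absurd hy (by simp [step])
  · rintro _ ⟨u, rfl⟩ y hy
    obtain ⟨-, rfl⟩ : D.source j u ≠ D.source j t ∧ .dart j true = y := by
      simpa [step, D.source_mem] using hy
    rfl

/-- If every dart can be killed in every core state, possibly after a swap, then the adversary
kills all tokens over and over again without any significant transition. -/
theorem exists_forall_not_avail (j : J) : ∃ b ∈ M.core j, ∃ t,
    ¬ M.Avail j b t ∧ ¬ M.Avail j (M.next b (.swap j)) (!t) := by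
  by_contra! hav
  obtain ⟨b, hb, hbad⟩ := M.exists_not_sigReaches_breakpoint (core_nonempty j)
  have hkill (b : Q) (hb : b ∈ M.core j) :
      M.breakpoint.SigReaches (M.core j ×ˢ {Set.univ}) (b, {.dart j true}) := by
    by_cases h : M.Avail j b true
    · exact sigReaches_singleton_of_avail hb h
    · refine sigReaches_of_swap hb ?_ (sigReaches_singleton_of_avail
        (not_sig_and_next_swap_mem_core hb).2 (hav b hb true h))
      rintro _ rfl y hy
      exact (Option.some.inj ((D.step_swap j _).symm.trans hy)).symm
  refine hbad ?_
  by_cases h : M.Avail j b true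
  · exact sigReaches_univ_of_avail hb h hkill
  · exact sigReaches_of_swap hb (fun _ _ _ _ => trivial) (sigReaches_univ_of_avail
      (not_sig_and_next_swap_mem_core hb).2 (hav b hb true h) hkill)

end Adversary

section Counting

theorem disjoint_drops (h : j ≠ j') : Disjoint (M.drops j) (M.drops j') := by
  rw [Set.disjoint_left]
  rintro _ ⟨b, ⟨hb, hs⟩, rfl⟩ ⟨b', ⟨hb', hs'⟩, hdrop⟩
  exact (shared_or_shared h hb hb' hdrop.symm).elim hs hs'

theorem ncard_balanced_add_two_le (j : J) :
    (M.balanced j).ncard + 2 ≤ (M.states j).ncard := by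
  obtain ⟨q₁, h₁, hp₁⟩ := M.exists_pointed j true
  obtain ⟨q₂, h₂, hp₂⟩ := M.exists_pointed j false
  have hne : q₁ ≠ q₂ := fun h => Bool.false_ne_true (hp₁.eq_of_rank_eq (h ▸ hp₂.1))
  have hdisj : Disjoint (M.balanced j) {q₁, q₂} := by
    rw [Set.disjoint_left]
    rintro _ hq (rfl | rfl)
    exacts [hq.2 _ hp₁, hq.2 _ hp₂]
  rw [← Set.ncard_pair hne, ← Set.ncard_union_eq hdisj]
  exact Set.ncard_le_ncard (Set.union_subset (Set.sep_subset _ _) (Set.pair_subset h₁ h₂))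

theorem drops_nonempty (hbal : (M.balanced j).Subsingleton) : (M.drops j).Nonempty := by
  by_contra hempty
  have hshared (b : Q) (hb : b ∈ M.core j) : M.Shared j b := by
    by_contra hs
    exact hempty ⟨_, b, ⟨hb, hs⟩, rfl⟩
  obtain ⟨b, hb, t, hn, hn'⟩ := M.exists_forall_not_avail j
  have hb' := (not_sig_and_next_swap_mem_core hb).2
  have hbalanced {b u} (hb : b ∈ M.core j) (hn : ¬ M.Avail j b u) : b ∈ M.balanced j :=
    ⟨hb.1, fun t ht => hn ((hshared b hb).avail_of_pointed hb ht u)⟩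
  rw [← hbal (hbalanced hb hn) (hbalanced hb' hn')] at hn'
  obtain ⟨u, hu⟩ := (hshared b hb).exists_avail hb
  rcases Bool.eq_or_eq_not u t with rfl | rfl
  exacts [hn hu, hn' hu]

theorem Pointed.next_swap_ne (hq : M.HasClass (some j) q) (h : M.Pointed j q t) :
    M.next q (.swap j) ≠ q := fun he =>
  h.2 (by simpa only [he] using rank_next_swap_eq_minRank hq h.1)

theorem not_shared_of_ncard_eq_two (hcard : (M.states j).ncard = 2) (hbal : M.balanced j = ∅)
    (hb : b ∈ M.core j) : ¬ M.Shared j b := by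
  intro hs
  obtain ⟨c, d, -, hstates⟩ := Set.ncard_eq_two.1 hcard
  have hcd (q : Q) (hq : M.HasClass (some j) q) : q = c ∨ q = d :=
    hstates.subset (show q ∈ M.states j from hq)
  have hpointed (q : Q) (hq : M.HasClass (some j) q) : ∃ t, M.Pointed j q t :=
    exists_pointed_of_notMem_balanced hq (hbal ▸ Set.notMem_empty q)
  have hav (u : Bool) : M.Avail j b u :=
    hs.avail_of_pointed hb (hpointed b hb.1).choose_spec u
  obtain ⟨x, hx, t, hn, hn'⟩ := M.exists_forall_not_avail j
  have hxb : x ≠ b := fun h => hn (h ▸ hav t)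
  have hswap : M.next x (.swap j) ≠ x := (hpointed x hx.1).choose_spec.next_swap_ne hx.1
  have : M.next x (.swap j) = b := by
    grind [hcd b hb.1, hcd x hx.1, hcd _ (hasClass_next_swap hx.1)]
  exact hn' (this ▸ hav _)

theorem Pointed.drop_ne (hb : b ∈ M.core j) (hb' : b' ∈ M.core j) (h : M.Pointed j b t)
    (h' : M.Pointed j b' (!t)) : M.drop j b ≠ M.drop j b' := fun hdrop =>
  D.source_ne j t (h.source_eq hb hb' hdrop h')

theorem two_le_ncard_drops (hcard : (M.states j).ncard = 2) (hbal : M.balanced j = ∅) :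
    2 ≤ (M.drops j).ncard := by
  obtain ⟨b, hb⟩ := M.core_nonempty j
  have hb' := (not_sig_and_next_swap_mem_core hb).2
  obtain ⟨t, ht⟩ := exists_pointed_of_notMem_balanced hb.1 (hbal ▸ Set.notMem_empty b)
  obtain ⟨t', ht'⟩ := exists_pointed_of_notMem_balanced hb'.1 (hbal ▸ Set.notMem_empty _)
  obtain rfl := ht'.eq_of_rank_eq (rank_next_swap_eq_minRank hb.1 ht.1)
  exact (Set.one_lt_ncard).2 ⟨_, ⟨b, ⟨hb, not_shared_of_ncard_eq_two hcard hbal hb⟩, rfl⟩,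
    _, ⟨_, ⟨hb', not_shared_of_ncard_eq_two hcard hbal hb'⟩, rfl⟩, ht.drop_ne hb hb' ht'⟩

theorem four_le_ncard (j : J) : 4 ≤ (M.states j ∪ M.drops j).ncard := by
  rw [Set.ncard_union_eq (disjoint_states_drops j j)]
  have hbal := M.ncard_balanced_add_two_le j
  obtain h | h | h : (M.states j).ncard = 2 ∨ (M.states j).ncard = 3 ∨ 4 ≤ (M.states j).ncard := by
    omega
  · have := two_le_ncard_drops h ((Set.ncard_eq_zero).1 (by omega))
    omega
  · have := (Set.ncard_pos).2 (drops_nonempty (Set.ncard_le_one_iff_subsingleton.1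
      (by omega : (M.balanced j).ncard ≤ 1)))
    omega
  · omega

theorem four_mul_card_le (M : D.Recognizer Q) : 4 * Nat.card J ≤ Nat.card Q := by
  refine mul_card_le_card_of_pairwise_disjoint (fun j j' h => ?_) M.four_le_ncard
  simp only [Function.onFun, Set.disjoint_union_left, Set.disjoint_union_right]
  exact ⟨⟨disjoint_states h, (disjoint_states_drops j' j).symm⟩, disjoint_states_drops j j',
    disjoint_drops h⟩

end Counting

end Recognizer

theorem card_lt_of_deterministic [Fintype J] [Nonempty J] [Fintype V] [Fintype L]
    (hcard : Fintype.card V + Fintype.card L + 1 < Fintype.card J) (D : EdgeDesign J V L) (j₀ : J)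
    {Q : Type} [Fintype Q] {B : BuchiAutomaton (Letter J V) Q} (hB : B.Deterministic)
    (hL : B.Lang = (D.automaton j₀).Lang) : Fintype.card (State J V L) < Fintype.card Q := by
  obtain ⟨M⟩ := TokenSystem.nonempty_recognizer hB
    (hL.trans (D.lang_automaton_and_historyDeterministic j₀).1) D.nonempty_lang D.lang_ne_univ
  have hQ : 4 * Nat.card J ≤ Nat.card Q := Recognizer.four_mul_card_le M
  rw [Nat.card_eq_fintype_card, Nat.card_eq_fintype_card] at hQ
  have hA := card_state_le (J := J) (V := V) (L := L)
  omega

end EdgeDesign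

/-! ### Difference families -/

/-- Data generating an edge design by translation in a group: a dart of kind `(i, t)` points from
its source in the direction `dir i t`, and its label is the translate of the base block in which
the source is at position `off i t`. -/
structure DifferenceFamily (G I : Type) [AddCommGroup G] where
  dir : I → Bool → G
  off : I → Bool → G
  base : Finset G
  dir_not (i : I) (t : Bool) : dir i (!t) = -dir i t
  dir_ne_zero (i : I) (t : Bool) : dir i t ≠ 0
  off_mem (i : I) (t : Bool) : off i t ∈ base
  off_add_dir_mem (i : I) (t : Bool) : off i t + dir i t ∈ base
  mem_both (i : I) : ∀ a ∈ base, a - off i true - dir i true + off i false ∈ base →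
    a = off i true ∨ a = off i true + dir i true
  mem_star (i i' : I) (t t' : Bool) : (i, t) ≠ (i', t') →
    ∀ a ∈ base, a - off i t + off i' t' ∈ base → a = off i t
  not_mem_opposite (i i' : I) (t t' : Bool) : (i, t) ≠ (i', t') →
    dir i' t' - dir i t + off i (!t) ∉ base

namespace DifferenceFamily

variable {G I : Type} [AddCommGroup G] (F : DifferenceFamily G I)

/-- The source of a dart of the edge `(x, i)`, which joins `x` and `x + F.dir i true`. -/
def source (j : G × I) (t : Bool) : G := if t then j.1 else j.1 + F.dir j.2 true

/-- The label of a dart, a translation applied to the base block. -/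
def label (j : G × I) (t : Bool) : G := F.source j t - F.off j.2 t

/-- The translate of the base block by `z`. -/
def block (z : G) : Set G := {v | v - z ∈ F.base}

variable {F} {j j' : G × I} {t t' : Bool} {v : G}

theorem source_not (j : G × I) (t : Bool) : F.source j (!t) = F.source j t + F.dir j.2 t := by
  cases t
  · have h : F.dir j.2 false = -F.dir j.2 true := F.dir_not j.2 true
    simp [source, h]
  · rfl

theorem mem_block_label : v ∈ F.block (F.label j t) ↔ v - F.source j t + F.off j.2 t ∈ F.base := by
  rw [block, label, Set.mem_ofPred_eq, sub_sub_eq_add_sub, add_sub_right_comm]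

theorem kind_ne (h : F.source j t = F.source j' t') (hne : (j, t) ≠ (j', t')) :
    (j.2, t) ≠ (j'.2, t') := by
  intro hk
  obtain ⟨x, i⟩ := j
  obtain ⟨x', i'⟩ := j'
  obtain ⟨rfl, rfl⟩ := Prod.mk.inj hk
  refine hne ?_
  cases t <;> simp_all [source]

variable (F) in
/-- The edge design of a difference family. -/
def design : EdgeDesign (G × I) G G where
  source := F.source
  label := F.label
  block := F.block
  source_ne j t := by
    rw [source_not]
    exact (add_ne_left.2 (F.dir_ne_zero j.2 t)).symm
  source_mem j t t' := by
    rw [mem_block_label]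
    rcases Bool.eq_or_eq_not t t' with rfl | rfl
    · simpa using F.off_mem j.2 t
    · simpa [source_not, add_comm] using F.off_add_dir_mem j.2 t'
  mem_both {j v} h := by
    have htrue := mem_block_label.1 (h true)
    have hfalse := mem_block_label.1 (h false)
    have hshift : v - F.source j true + F.off j.2 true - F.off j.2 true - F.dir j.2 true +
        F.off j.2 false = v - F.source j false + F.off j.2 false := by
      have hsource : F.source j false = F.source j true + F.dir j.2 true := source_not j true
      rw [hsource]
      abel
    rcases F.mem_both j.2 _ htrue (hshift ▸ hfalse) with h | h
    · exact ⟨true, by simpa [sub_eq_zero] using h⟩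
    · refine ⟨false, ?_⟩
      rw [add_comm, add_right_inj, sub_eq_iff_eq_add'] at h
      exact h
  mem_star {j j' t t' v} hsource hne h h' := by
    rw [mem_block_label] at h h'
    simpa [sub_eq_zero] using F.mem_star j.2 j'.2 t t' (kind_ne hsource hne) _ h
      (by simpa [hsource] using h')
  not_mem_opposite {j j' t t'} hsource hne h := by
    refine F.not_mem_opposite j.2 j'.2 t t'
      (kind_ne hsource fun he => hne (congrArg Prod.fst he)) ?_
    rw [mem_block_label, source_not, source_not, hsource, add_sub_add_left_eq_sub] at h
    exact h

/-- The three cube roots of unity modulo 97. -/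
def cubeRoot : Fin 3 → ZMod 97 := ![1, 35, 61]

/-- A difference family modulo 97, found by a search among those that are invariant under
multiplication by cube roots of unity. -/
def cubic : DifferenceFamily (ZMod 97) (Fin 3) where
  dir i t := bif t then cubeRoot i else -cubeRoot i
  off i t := (bif t then 26 else 52) * cubeRoot i
  base := Finset.image₂ (· * ·) {26, 27, 51, 52} (Finset.univ.image cubeRoot)
  dir_not := by decide
  dir_ne_zero := by decide
  off_mem := by decide
  off_add_dir_mem := by decide
  mem_both := by decide
  mem_star := by decide
  not_mem_opposite := by decide

end DifferenceFamily

/-- There is a finite alphabet `σ` and a history-deterministic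
Büchi automaton `A` over `σ` such that every deterministic Büchi automaton
recognising the same language has strictly more states than `A`. -/
theorem exists_succinct_hd_buchi :
    ∃ (σ : Type) (_ : Fintype σ) (Q : Type) (iQ : Fintype Q) (A : BuchiAutomaton σ Q),
      A.HistoryDeterministic ∧
      ∀ (Q' : Type) (iQ' : Fintype Q') (B : BuchiAutomaton σ Q'),
        B.Deterministic → B.Lang = A.Lang →
        @Fintype.card Q iQ < @Fintype.card Q' iQ' :=
  ⟨EdgeDesign.Letter (ZMod 97 × Fin 3) (ZMod 97), inferInstance,
    EdgeDesign.State (ZMod 97 × Fin 3) (ZMod 97) (ZMod 97), inferInstance,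
    DifferenceFamily.cubic.design.automaton (0, 0),
    (EdgeDesign.lang_automaton_and_historyDeterministic _ _).2,
    fun _ _ _ hB hL => EdgeDesign.card_lt_of_deterministic (by simp [ZMod.card]) _ _ hB hL⟩
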